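/- arXiv:1312.7672 — 4 statements merged into one kernel-verified Lean document; each statement's English description precedes it below -/
import Mathlib

section
/- Let f be a weak integer additive set-indexer of a finite simple graph G, and label each vertex of the line graph L(G) (i.e., each edge e of G) by the set g_f(e) = f(u) + f(v) where e = uv. This induced labeling satisfies the weak IASI cardinality condition on L(G) — namely |g_f(e₁) + g_f(e₂)| = max(|g_f(e₁)|, |g_f(e₂)|) for every pair of adjacent vertices e₁, e₂ of L(G) — if and only if in every pair of adjacent edges of G at least one edge is mono-indexed (has set-indexing number 1). -/
/-!
Every edge label is a nonempty finite set of naturals, so everything reduces to a fact about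
two such sets `A`, `B`: `|A + B| = max |A| |B|` exactly when one of them is a singleton. A singleton
summand only translates the other set; conversely, the linear-order Cauchy–Davenport bound
`|A| + |B| - 1 ≤ |A + B|` exceeds the maximum as soon as both cardinalities are at least two.
-/

open scoped Pointwise

/-- The induced set-label on `Sym2 V` given vertex set-labels `f`:
`edgeLabel f s(u,v) = f u + f v` (pointwise sumset). -/
def edgeLabel {V : Type*} (f : V → Finset ℕ) : Sym2 V → Finset ℕ :=
  Sym2.lift ⟨fun u v => f u + f v, fun u v => add_comm (f u) (f v)⟩

/-- An integer additive set-indexer (IASI) of a simple graph `G`: an injective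
function assigning nonempty finite sets of non-negative integers to vertices
such that the induced sumset-labeling of edges is injective on the edge set. -/
def IsIASI {V : Type*} (G : SimpleGraph V) (f : V → Finset ℕ) : Prop :=
  Function.Injective f ∧ (∀ v, (f v).Nonempty) ∧
    ∀ e₁ ∈ G.edgeSet, ∀ e₂ ∈ G.edgeSet, edgeLabel f e₁ = edgeLabel f e₂ → e₁ = e₂

/-- The line graph of `G`: vertices are the edges of `G`, two being adjacent iff
they are distinct and share a common endpoint. -/
def lineGraph {V : Type*} (G : SimpleGraph V) : SimpleGraph G.edgeSet :=
  SimpleGraph.fromRel fun e₁ e₂ => ∃ x : V, x ∈ e₁.1 ∧ x ∈ e₂.1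

theorem edgeLabel_nonempty {V : Type*} {f : V → Finset ℕ} (hf : ∀ v, (f v).Nonempty)
    (e : Sym2 V) : (edgeLabel f e).Nonempty := by
  induction e with
  | _ u v => exact (hf u).add (hf v)

theorem card_add_eq_max_iff {A B : Finset ℕ} (hA : A.Nonempty) (hB : B.Nonempty) :
    (A + B).card = max A.card B.card ↔ A.card = 1 ∨ B.card = 1 := by
  have hA' := hA.card_pos
  have hB' := hB.card_pos
  constructor
  · intro h
    have := cauchy_davenport_add_of_linearOrder_isCancelAdd hA hB
    omega
  · rintro (h | h)
    · obtain ⟨a, rfl⟩ := Finset.card_eq_one.mp h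
      rw [Finset.card_singleton_add, h]
      omega
    · obtain ⟨b, rfl⟩ := Finset.card_eq_one.mp h
      rw [Finset.card_add_singleton, h]
      omega

/-- For a weak IASI `f` of `G`, the labeling of `L(G)` by `e ↦ g_f(e)` satisfies
the weak IASI cardinality condition on every pair of adjacent vertices of
`L(G)` iff in every pair of adjacent edges of `G` at least one edge is
mono-indexed. -/
theorem lineGraph_weak_condition_iff {V : Type*} [Fintype V]
    (G : SimpleGraph V) (f : V → Finset ℕ) (hf : IsIASI G f)
    (hweak : ∀ ⦃u v : V⦄, G.Adj u v →
      (f u + f v).card = max (f u).card (f v).card) :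
    (∀ e₁ e₂ : G.edgeSet, (lineGraph G).Adj e₁ e₂ →
        (edgeLabel f e₁.1 + edgeLabel f e₂.1).card =
          max (edgeLabel f e₁.1).card (edgeLabel f e₂.1).card) ↔
      (∀ e₁ e₂ : G.edgeSet, (lineGraph G).Adj e₁ e₂ →
        (edgeLabel f e₁.1).card = 1 ∨ (edgeLabel f e₂.1).card = 1) := by
  exact forall₃_congr fun e₁ e₂ _ =>
    card_add_eq_max_iff (edgeLabel_nonempty hf.2.1 e₁.1) (edgeLabel_nonempty hf.2.1 e₂.1)
end

section
/- Let f be a weak integer additive set-indexer of a finite simple graph G without isolated vertices, and label the vertices of the total graph T(G) by assigning f(v) to each vertex v of G and g_f(e) = f(u) + f(v) to each edge e = uv of G. This induced labeling satisfies the weak IASI cardinality condition |A + B| = max(|A|, |B|) on every edge of T(G) if and only if f is 1-uniform, i.e., |g_f(e)| = 1 for every edge e of G. -/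
/-!
For nonempty finite sets of naturals, `|A| + |B| ≤ |A + B| + 1`, so the weak cardinality condition on
the pair `A, B` forces one of the two sets to be a singleton. An edge `e = uv` of `G` is adjacent in
the total graph to its endpoint `u`; since `|f u| ≤ |f u + f v|`, the condition on this pair forces
`|f u| = 1`. Likewise `|f v| = 1`, and then `f u + f v` is a singleton.
Conversely, if every edge label is a singleton then, as no vertex is isolated, so is every vertex
label, and singletons satisfy the weak condition trivially.
-/


open scoped Pointwise

/-- The total graph of `G`. -/
def totalGraph {V : Type*} (G : SimpleGraph V) : SimpleGraph (V ⊕ G.edgeSet) :=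
  SimpleGraph.fromRel fun x y =>
    match x, y with
    | Sum.inl a, Sum.inl b => G.Adj a b
    | Sum.inl a, Sum.inr e => a ∈ e.1
    | Sum.inr e, Sum.inl a => a ∈ e.1
    | Sum.inr e, Sum.inr e' => ∃ x : V, x ∈ e.1 ∧ x ∈ e'.1

/-- If `A` satisfies the weak cardinality condition together with a sumset `A + B`, then `A` is a
singleton: the sumset of `A` and `A + B` has at least `|A| + |A + B| - 1` elements, while the larger
of the two sets is `A + B`. -/
theorem card_eq_one_of_weak_add {A B : Finset ℕ} (hA : A.Nonempty) (hB : B.Nonempty)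
    (h : (A + (A + B)).card = max A.card (A + B).card) : A.card = 1 := by
  have h1 := cauchy_davenport_add_of_linearOrder_isCancelAdd hA (hA.add hB)
  have h2 : A.card ≤ (A + B).card := Finset.card_le_card_add_right hB
  have h3 := hA.card_pos
  rw [h, max_eq_right h2] at h1
  omega

/-- For a weak IASI `f` of a graph `G` without isolated vertices, the induced
labeling of `T(G)` (vertices of `G` keep their labels, edges get their induced
labels) satisfies the weak IASI cardinality condition on every edge of `T(G)`
iff `f` is 1-uniform, i.e. every edge of `G` is mono-indexed. -/
theorem totalGraph_weak_condition_iff {V : Type*} [Fintype V]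
    (G : SimpleGraph V) (f : V → Finset ℕ) (hf : IsIASI G f)
    (hweak : ∀ ⦃u v : V⦄, G.Adj u v →
      (f u + f v).card = max (f u).card (f v).card)
    (hiso : ∀ v : V, ∃ u : V, G.Adj v u) :
    (∀ x y : V ⊕ G.edgeSet, (totalGraph G).Adj x y →
        ((Sum.elim f (fun e => edgeLabel f e.1) x) +
            (Sum.elim f (fun e => edgeLabel f e.1) y)).card =
          max (Sum.elim f (fun e => edgeLabel f e.1) x).card
            (Sum.elim f (fun e => edgeLabel f e.1) y).card) ↔
      (∀ e ∈ G.edgeSet, (edgeLabel f e).card = 1) := by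
  obtain ⟨-, hne, -⟩ := hf
  constructor
  · intro h e he
    induction e with | _ u v => ?_
    have huv : G.Adj u v := he
    have hu : (f u).card = 1 := by
      refine card_eq_one_of_weak_add (hne u) (hne v) (h (Sum.inl u) (Sum.inr ⟨s(u, v), he⟩) ?_)
      simp [totalGraph]
    have hv : (f v).card = 1 := by
      refine card_eq_one_of_weak_add (hne v) (hne u) ?_
      have := h (Sum.inl v) (Sum.inr ⟨s(u, v), he⟩) (by simp [totalGraph])
      rw [add_comm (f v) (f u)]
      exact this
    have := hweak huv
    rw [hu, hv] at this
    exact this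
  · intro h
    have hvert (v : V) : (f v).card = 1 := by
      obtain ⟨u, hu⟩ := hiso v
      have h1 : (f v + f u).card = 1 := h s(v, u) hu
      have h2 : (f v).card ≤ (f v + f u).card := Finset.card_le_card_add_right (hne u)
      have h3 := (hne v).card_pos
      omega
    have hall (x : V ⊕ G.edgeSet) : (Sum.elim f (fun e => edgeLabel f e.1) x).card = 1 := by
      rcases x with v | e
      · exact hvert v
      · exact h e.1 e.2
    intro x y _
    obtain ⟨a, ha⟩ := Finset.card_eq_one.mp (hall x)
    obtain ⟨b, hb⟩ := Finset.card_eq_one.mp (hall y)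
    simp [ha, hb]
end

section
/- Let f be a strong integer additive set-indexer of a finite simple graph G, and suppose G has a vertex v of degree at least 2 with |f(v)| ≥ 2. Then the labeling of the line graph L(G) induced by f (each vertex e = uv of L(G) labeled by g_f(e) = f(u) + f(v)) is not a strong IASI of L(G): there exist adjacent vertices e₁, e₂ of L(G) with |g_f(e₁) + g_f(e₂)| < |g_f(e₁)| · |g_f(e₂)|. -/
/-! Write `A = f v`, `B = f u`, `C = f w`. The edges `vu` and `vw` share `v`, so they are adjacent in
the line graph, with labels `A + B` and `A + C`. For distinct `a, a' ∈ A` and any `b ∈ B`, `c ∈ C`,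
the identity `(a + b) + (a' + c) = (a' + b) + (a + c)` represents one element of
`(A + B) + (A + C)` in two different ways, so this sumset has fewer than `|A + B| * |A + C|`
elements. -/

open scoped Pointwise

/-- Two sumsets with a common summand of at least two elements never have a sumset of full size. -/
theorem card_add_add_lt (A B C : Finset ℕ) (hA : 2 ≤ A.card) (hB : B.Nonempty)
    (hC : C.Nonempty) :
    ((A + B) + (A + C)).card < (A + B).card * (A + C).card := by
  refine lt_of_le_of_ne Finset.card_add_le fun h => ?_
  rw [Finset.card_add_iff] at h
  obtain ⟨a, ha, a', ha', hne⟩ := Finset.one_lt_card.mp hA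
  obtain ⟨b, hb⟩ := hB
  obtain ⟨c, hc⟩ := hC
  have key := @h (a + b, a' + c)
    ⟨Finset.add_mem_add ha hb, Finset.add_mem_add ha' hc⟩ (a' + b, a + c)
    ⟨Finset.add_mem_add ha' hb, Finset.add_mem_add ha hc⟩ (by dsimp only; omega)
  exact hne (by simpa using congrArg Prod.fst key)

/-- If `f` is a strong IASI of `G` and `v` is a vertex of degree at least 2
(witnessed by two distinct neighbors `u`, `w`) with `|f v| ≥ 2`, then the
induced labeling of the line graph is not a strong IASI: some pair of adjacent
vertices of `L(G)` violates the strong cardinality condition. -/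
theorem lineGraph_not_strong {V : Type*} [Fintype V]
    (G : SimpleGraph V) (f : V → Finset ℕ) (hf : IsIASI G f)
    (hstrong : ∀ ⦃u v : V⦄, G.Adj u v →
      (f u + f v).card = (f u).card * (f v).card)
    (v u w : V) (huw : u ≠ w) (hvu : G.Adj v u) (hvw : G.Adj v w)
    (hv : 2 ≤ (f v).card) :
    ∃ e₁ e₂ : G.edgeSet, (lineGraph G).Adj e₁ e₂ ∧
      (edgeLabel f e₁.1 + edgeLabel f e₂.1).card <
        (edgeLabel f e₁.1).card * (edgeLabel f e₂.1).card := by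
  refine ⟨⟨s(v, u), hvu⟩, ⟨s(v, w), hvw⟩, ?_,
    card_add_add_lt (f v) (f u) (f w) hv (hf.2.1 u) (hf.2.1 w)⟩
  rw [lineGraph, SimpleGraph.fromRel_adj]
  refine ⟨fun h => huw ?_, Or.inl ⟨v, Sym2.mem_mk_left v u, Sym2.mem_mk_left v w⟩⟩
  exact Sym2.congr_right.mp (congrArg Subtype.val h)
end

section
/- Let f be a strong integer additive set-indexer of a finite simple graph G, and suppose G has an edge uv with |f(v)| ≥ 2. Then the labeling of the total graph T(G) induced by f (each vertex of T(G) coming from a vertex w of G labeled by f(w), and each vertex coming from an edge e = xy of G labeled by g_f(e) = f(x) + f(y)) is not a strong IASI of T(G): there exists an edge of T(G) whose two endpoint labels A, B satisfy |A + B| < |A| · |B|. -/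
/-!
The witnessing edge of `T(G)` joins the vertex `v` to the edge `uv`. Its endpoint labels are `f v`
and `f u + f v`, with sumset `f u + (f v + f v)`. Since addition is commutative and `f v` has at
least two elements, `|f v + f v| < |f v|²` (`card_add_self_lt`), whereas strongness of `f` on `uv`
makes the product of the endpoint cardinalities `|f u| |f v|²`.
-/

open scoped Pointwise

/-- Two distinct elements `a`, `b` give the coincidence `a + b = b + a`, so addition is not
injective on `A × A`. -/
theorem card_add_self_lt {A : Finset ℕ} (hA : 2 ≤ A.card) :
    (A + A).card < A.card * A.card := by
  obtain ⟨a, ha, b, hb, hab⟩ := Finset.one_lt_card.mp hA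
  refine lt_of_le_of_ne Finset.card_add_le fun h => hab ?_
  have hinj := Finset.card_add_iff.mp h
  have heq : (a, b) = (b, a) :=
    hinj (Set.mk_mem_prod ha hb) (Set.mk_mem_prod hb ha) (add_comm a b)
  exact congrArg Prod.fst heq

/-- If `f` is a strong IASI of `G` and `G` has an edge `uv` with `|f v| ≥ 2`,
then the induced labeling of the total graph `T(G)` is not a strong IASI: some
edge of `T(G)` has endpoint labels `A`, `B` with `|A + B| < |A|·|B|`. -/
theorem totalGraph_not_strong {V : Type*} [Fintype V]
    (G : SimpleGraph V) (f : V → Finset ℕ) (hf : IsIASI G f)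
    (hstrong : ∀ ⦃u v : V⦄, G.Adj u v →
      (f u + f v).card = (f u).card * (f v).card)
    (u v : V) (huv : G.Adj u v) (hv : 2 ≤ (f v).card) :
    ∃ x y : V ⊕ G.edgeSet, (totalGraph G).Adj x y ∧
      ((Sum.elim f (fun e => edgeLabel f e.1) x) +
          (Sum.elim f (fun e => edgeLabel f e.1) y)).card <
        (Sum.elim f (fun e => edgeLabel f e.1) x).card *
          (Sum.elim f (fun e => edgeLabel f e.1) y).card := by
  have hlt : (f v + f v).card < (f v).card * (f v).card := card_add_self_lt hv
  have hu : 0 < (f u).card := (hf.2.1 u).card_pos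
  refine ⟨Sum.inl v, Sum.inr ⟨s(u, v), huv⟩, ?_, ?_⟩
  · simp [totalGraph, SimpleGraph.fromRel_adj]
  · change (f v + (f u + f v)).card < (f v).card * (f u + f v).card
    rw [hstrong huv, add_left_comm]
    calc (f u + (f v + f v)).card ≤ (f u).card * (f v + f v).card := Finset.card_add_le
      _ < (f u).card * ((f v).card * (f v).card) := Nat.mul_lt_mul_of_pos_left hlt hu
      _ = (f v).card * ((f u).card * (f v).card) := by ring
end
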